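/- Let P be a partial order on {1,…,n} that is a unit interval order. Then P is canonically labeled if and only if the antiadjacency matrix of P is a Dyck matrix. -/

import Mathlib

open Classical in
/-- The altitude of `i`: `|{j : j ≤_P i}| - |{j : i ≤_P j}|`. -/
noncomputable def altitude {n : ℕ} (P : PartialOrder (Fin n)) (i : Fin n) : ℤ :=
  ((Finset.univ.filter (fun j : Fin n => P.le j i)).card : ℤ) -
    ((Finset.univ.filter (fun j : Fin n => P.le i j)).card : ℤ)

/-- `P` is canonically labeled if `α(i) < α(j)` implies `i < j` as integers. -/
def IsCanonicallyLabeled {n : ℕ} (P : PartialOrder (Fin n)) : Prop :=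
  ∀ i j : Fin n, altitude P i < altitude P j → i < j

/-- A 0/1 matrix is a Dyck matrix: ones on and below the diagonal, and the zero entries form a
right-justified Young diagram anchored at the upper-right corner. -/
def IsDyckMatrix {n : ℕ} (A : Matrix (Fin n) (Fin n) ℝ) : Prop :=
  (∀ i j : Fin n, A i j = 0 ∨ A i j = 1) ∧
  (∀ i j : Fin n, (j : ℕ) ≤ (i : ℕ) → A i j = 1) ∧
  (∀ i j i' j' : Fin n, A i j = 0 → (i' : ℕ) ≤ (i : ℕ) → (j : ℕ) ≤ (j' : ℕ) → A i' j' = 0)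

open Classical in
theorem altitude_eq_aux {n : ℕ} (P : PartialOrder (Fin n)) (i : Fin n) :
    altitude P i = ((Finset.univ.filter (fun j : Fin n => P.lt j i)).card : ℤ) -
      ((Finset.univ.filter (fun j : Fin n => P.lt i j)).card : ℤ) := by
  have hirr : ¬ P.lt i i := @lt_irrefl _ P.toPreorder i
  have h1 : Finset.univ.filter (fun j : Fin n => P.le j i) =
      insert i (Finset.univ.filter (fun j : Fin n => P.lt j i)) := by
    ext j
    simp only [Finset.mem_filter, Finset.mem_univ, true_and, Finset.mem_insert]
    exact @le_iff_eq_or_lt _ P j i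
  have h2 : Finset.univ.filter (fun j : Fin n => P.le i j) =
      insert i (Finset.univ.filter (fun j : Fin n => P.lt i j)) := by
    ext j
    simp only [Finset.mem_filter, Finset.mem_univ, true_and, Finset.mem_insert]
    rw [eq_comm (a := j)]
    exact @le_iff_eq_or_lt _ P i j
  unfold altitude
  rw [h1, h2, Finset.card_insert_of_notMem (by simpa using hirr),
    Finset.card_insert_of_notMem (by simpa using hirr)]
  push_cast
  ring

open Classical in
theorem altitude_mono_aux {n : ℕ} (P : PartialOrder (Fin n)) (i j : Fin n)
    (hD : ∀ k, P.lt k i → P.lt k j) (hU : ∀ k, P.lt j k → P.lt i k) :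
    altitude P i ≤ altitude P j := by
  rw [altitude_eq_aux, altitude_eq_aux]
  have h1 := Finset.card_le_card (Finset.monotone_filter_right Finset.univ
    (p := fun k => P.lt k i) (q := fun k => P.lt k j) (fun k _ => hD k))
  have h2 := Finset.card_le_card (Finset.monotone_filter_right Finset.univ
    (p := fun k => P.lt j k) (q := fun k => P.lt i k) (fun k _ => hU k))
  omega

open Classical in
theorem altitude_key_aux {n : ℕ} (P : PartialOrder (Fin n)) (q : Fin n → ℝ)
    (hq : ∀ i j : Fin n, P.lt i j ↔ q i + 1 < q j) (i j : Fin n)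
    (h : altitude P i ≤ altitude P j) :
    (∀ k, P.lt k i → P.lt k j) ∧ (∀ k, P.lt j k → P.lt i k) := by
  rcases le_total (q i) (q j) with hij | hij
  · refine ⟨fun k hk => ?_, fun k hk => ?_⟩ <;> rw [hq] at * <;> linarith
  · have s1 : Finset.univ.filter (fun k => P.lt k j) ⊆ Finset.univ.filter (fun k => P.lt k i) :=
      Finset.monotone_filter_right _ (fun k _ (hk : P.lt k j) => by
        rw [hq] at *; linarith)
    have s2 : Finset.univ.filter (fun k => P.lt i k) ⊆ Finset.univ.filter (fun k => P.lt j k) :=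
      Finset.monotone_filter_right _ (fun k _ (hk : P.lt i k) => by
        rw [hq] at *; linarith)
    have c1 := Finset.card_le_card s1
    have c2 := Finset.card_le_card s2
    rw [altitude_eq_aux, altitude_eq_aux] at h
    have e1 := Finset.eq_of_subset_of_card_le s1 (by omega)
    have e2 := Finset.eq_of_subset_of_card_le s2 (by omega)
    refine ⟨fun k hk => ?_, fun k hk => ?_⟩
    · have : k ∈ Finset.univ.filter (fun k => P.lt k j) := by rw [e1]; simpa using hk
      simpa using this
    · have : k ∈ Finset.univ.filter (fun k => P.lt i k) := by rw [e2]; simpa using hk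
      simpa using this

open Classical in
/-- A unit interval order on `{1,…,n}` is canonically labeled iff its antiadjacency matrix is a
Dyck matrix. -/
theorem isCanonicallyLabeled_iff_antiadjacency_isDyckMatrix
    {n : ℕ} (P : PartialOrder (Fin n))
    (hP : ∃ q : Fin n → ℝ, ∀ i j : Fin n, P.lt i j ↔ q i + 1 < q j) :
    IsCanonicallyLabeled P ↔
      IsDyckMatrix (Matrix.of fun i j : Fin n => if P.lt i j then (0 : ℝ) else 1) := by
  obtain ⟨q, hq⟩ := hP
  constructor
  · intro hc
    have hm : ∀ i j : Fin n, (i : ℕ) ≤ (j : ℕ) → altitude P i ≤ altitude P j := by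
      intro i j hij
      by_contra hlt
      have h1 : (j : ℕ) < (i : ℕ) := hc j i (not_le.mp hlt)
      omega
    refine ⟨fun i j => ?_, fun i j hji => ?_, fun i j i' j' h hi hj => ?_⟩
    · by_cases h : P.lt i j <;> simp [h]
    · have hn : ¬ P.lt i j := fun h =>
        @lt_irrefl _ P.toPreorder j ((altitude_key_aux P q hq j i (hm j i hji)).2 j h)
      simp [hn]
    · have h0 : P.lt i j := by
        by_contra hn
        simp [hn] at h
      have h1 := (altitude_key_aux P q hq i' i (hm _ _ hi)).2 j h0
      have h2 := (altitude_key_aux P q hq j j' (hm _ _ hj)).1 i' h1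
      simp [h2]
  · rintro ⟨-, -, hd⟩ i j hlt
    have hz : ∀ a b : Fin n, P.lt a b ↔
        (Matrix.of fun i j : Fin n => if P.lt i j then (0 : ℝ) else 1) a b = 0 := by
      intro a b
      by_cases h : P.lt a b <;> simp [h]
    by_contra hn
    have hji : (j : ℕ) ≤ (i : ℕ) := not_lt.mp hn
    refine absurd (altitude_mono_aux P j i (fun k hk => ?_) (fun k hk => ?_)) (not_le.mpr hlt)
    · exact (hz _ _).2 (hd _ _ _ _ ((hz _ _).1 hk) le_rfl hji)
    · exact (hz _ _).2 (hd _ _ _ _ ((hz _ _).1 hk) hji le_rfl)
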